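/- Consider SO(n)/SO(2)×SO(n−3) as a 4-symmetric space with its unique canonical f-structure f₀. For s, t > 0, f₀ satisfies the Killing condition for (s,t) — that is, (1/2)[X, f₀X]_𝔪 + U_{s,t}(X, f₀X) − f₀(U_{s,t}(X,X)) = 0 for all X ∈ 𝔪 — if and only if s = 1 and t = 4/3. In other words, f₀ is a Killing f-structure exactly for the invariant Riemannian metric with characteristic numbers (1, 4/3). -/

import Mathlib

open Matrix

namespace FlagMfld

variable {n : ℕ}

/-- Membership in `so(n)`: real skew-symmetric `n×n` matrices. -/
def inSO (X : Matrix (Fin n) (Fin n) ℝ) : Prop := Xᵀ = -X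

/-- The isotropy subalgebra `𝔥 ≅ so(2) ⊕ so(n-3)`: skew matrices whose only (possibly)
nonzero entries are `H₂₃`, `H₃₂` and `H_{ij}` with `i,j ≥ 4` (1-based indexing; indices are
0-based in the formalization, so the allowed positions are `(1,2)`, `(2,1)` and `i,j ≥ 3`). -/
def inH (X : Matrix (Fin n) (Fin n) ℝ) : Prop :=
  Xᵀ = -X ∧ ∀ i j : Fin n, X i j ≠ 0 →
    (i.val = 1 ∧ j.val = 2) ∨ (i.val = 2 ∧ j.val = 1) ∨ (3 ≤ i.val ∧ 3 ≤ j.val)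

/-- The canonical reductive complement `𝔪`: skew matrices with `S₂₃ = 0` and `S_{ij} = 0`
for all `i,j ≥ 4` (1-based). -/
def inM (X : Matrix (Fin n) (Fin n) ℝ) : Prop :=
  Xᵀ = -X ∧ (∀ i j : Fin n, i.val = 1 → j.val = 2 → X i j = 0) ∧
    ∀ i j : Fin n, 3 ≤ i.val → 3 ≤ j.val → X i j = 0

/-- `𝔪₁`: only `S₁₂`, `S₁₃` (and skew partners) may be nonzero. -/
def inM1 (X : Matrix (Fin n) (Fin n) ℝ) : Prop :=
  Xᵀ = -X ∧ ∀ i j : Fin n, X i j ≠ 0 →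
    (i.val = 0 ∧ (j.val = 1 ∨ j.val = 2)) ∨ (j.val = 0 ∧ (i.val = 1 ∨ i.val = 2))

/-- `𝔪₂`: only `S_{2j}`, `S_{3j}` for `j ≥ 4` (and skew partners) may be nonzero. -/
def inM2 (X : Matrix (Fin n) (Fin n) ℝ) : Prop :=
  Xᵀ = -X ∧ ∀ i j : Fin n, X i j ≠ 0 →
    ((i.val = 1 ∨ i.val = 2) ∧ 3 ≤ j.val) ∨ ((j.val = 1 ∨ j.val = 2) ∧ 3 ≤ i.val)

/-- `𝔪₃`: only `S_{1j}` for `j ≥ 4` (and skew partners) may be nonzero. -/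
def inM3 (X : Matrix (Fin n) (Fin n) ℝ) : Prop :=
  Xᵀ = -X ∧ ∀ i j : Fin n, X i j ≠ 0 →
    (i.val = 0 ∧ 3 ≤ j.val) ∨ (j.val = 0 ∧ 3 ≤ i.val)

/-- Component along `𝔪₁` of the decomposition `𝔪 = 𝔪₁ ⊕ 𝔪₂ ⊕ 𝔪₃` (entrywise). -/
def p1 (X : Matrix (Fin n) (Fin n) ℝ) : Matrix (Fin n) (Fin n) ℝ :=
  Matrix.of fun i j =>
    if (i.val = 0 ∧ (j.val = 1 ∨ j.val = 2)) ∨ (j.val = 0 ∧ (i.val = 1 ∨ i.val = 2))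
    then X i j else 0

/-- Component along `𝔪₂`. -/
def p2 (X : Matrix (Fin n) (Fin n) ℝ) : Matrix (Fin n) (Fin n) ℝ :=
  Matrix.of fun i j =>
    if ((i.val = 1 ∨ i.val = 2) ∧ 3 ≤ j.val) ∨ ((j.val = 1 ∨ j.val = 2) ∧ 3 ≤ i.val)
    then X i j else 0

/-- Component along `𝔪₃`. -/
def p3 (X : Matrix (Fin n) (Fin n) ℝ) : Matrix (Fin n) (Fin n) ℝ :=
  Matrix.of fun i j =>
    if (i.val = 0 ∧ 3 ≤ j.val) ∨ (j.val = 0 ∧ 3 ≤ i.val) then X i j else 0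

/-- Projection of `so(n)` onto `𝔪` along `𝔥` (kills the entries at `𝔥`-positions). -/
def pM (X : Matrix (Fin n) (Fin n) ℝ) : Matrix (Fin n) (Fin n) ℝ :=
  Matrix.of fun i j =>
    if (i.val = 1 ∧ j.val = 2) ∨ (i.val = 2 ∧ j.val = 1) ∨ (3 ≤ i.val ∧ 3 ≤ j.val)
    then 0 else X i j

/-- Matrix commutator `[X,Y] = XY - YX`. -/
def br (X Y : Matrix (Fin n) (Fin n) ℝ) : Matrix (Fin n) (Fin n) ℝ := X * Y - Y * X

/-- The naturally reductive metric `g₀(X,Y) = (n-1)·Tr(XᵀY)`. -/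
noncomputable def g0 (X Y : Matrix (Fin n) (Fin n) ℝ) : ℝ :=
  ((n : ℝ) - 1) * (Xᵀ * Y).trace

/-- The invariant metric with characteristic numbers `(s,t)`:
`g_{s,t}(X,Y) = g₀(X₁,Y₁) + s·g₀(X₂,Y₂) + t·g₀(X₃,Y₃)`. -/
noncomputable def gst (s t : ℝ) (X Y : Matrix (Fin n) (Fin n) ℝ) : ℝ :=
  g0 (p1 X) (p1 Y) + s * g0 (p2 X) (p2 Y) + t * g0 (p3 X) (p3 Y)

/-- The symmetric part `U_{s,t}` of the Nomizu function of the Levi-Civita connection of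
`g_{s,t}`. -/
noncomputable def Ust (s t : ℝ) (X Y : Matrix (Fin n) (Fin n) ℝ) :
    Matrix (Fin n) (Fin n) ℝ :=
  ((t - s) / 2) • (br (p2 X) (p3 Y) + br (p2 Y) (p3 X)) +
  ((t - 1) / (2 * s)) • (br (p1 X) (p3 Y) + br (p1 Y) (p3 X)) +
  ((s - 1) / (2 * t)) • (br (p1 X) (p2 Y) + br (p1 Y) (p2 X))

/-- The block-diagonal matrix `B₄ = diag(1, [[0,1],[-1,0]], -1, …, -1)`. -/
def B4 : Matrix (Fin n) (Fin n) ℝ :=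
  Matrix.of fun i j =>
    if i.val = 0 ∧ j.val = 0 then 1
    else if i.val = 1 ∧ j.val = 2 then 1
    else if i.val = 2 ∧ j.val = 1 then -1
    else if 3 ≤ i.val ∧ i = j then -1
    else 0

/-- `θ = dΦ|𝔪` for the order-4 automorphism: `θ(X) = B₄ X B₄ᵀ`. -/
def th4 (X : Matrix (Fin n) (Fin n) ℝ) : Matrix (Fin n) (Fin n) ℝ := B4 * X * B4ᵀ

/-- The canonical f-structure `f₀ = (1/2)(θ - θ³)` of the 4-symmetric space. -/
noncomputable def f0 (X : Matrix (Fin n) (Fin n) ℝ) : Matrix (Fin n) (Fin n) ℝ :=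
  (1 / 2 : ℝ) • (th4 X - th4 (th4 (th4 X)))

/-- The block-diagonal matrix `B₆ = diag(1, [[1/2,√3/2],[-√3/2,1/2]], -1, …, -1)`. -/
noncomputable def B6 : Matrix (Fin n) (Fin n) ℝ :=
  Matrix.of fun i j =>
    if i.val = 0 ∧ j.val = 0 then 1
    else if i.val = 1 ∧ j.val = 1 then 1 / 2
    else if i.val = 1 ∧ j.val = 2 then Real.sqrt 3 / 2
    else if i.val = 2 ∧ j.val = 1 then -(Real.sqrt 3 / 2)
    else if i.val = 2 ∧ j.val = 2 then 1 / 2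
    else if 3 ≤ i.val ∧ i = j then -1
    else 0

/-- `θ = dΦ|𝔪` for the order-6 automorphism: `θ(X) = B₆ X B₆ᵀ`. -/
noncomputable def th6 (X : Matrix (Fin n) (Fin n) ℝ) : Matrix (Fin n) (Fin n) ℝ :=
  B6 * X * B6ᵀ

/-- `f₁ = (1/√3)(θ - θ⁵)`. -/
noncomputable def f1 (X : Matrix (Fin n) (Fin n) ℝ) : Matrix (Fin n) (Fin n) ℝ :=
  (1 / Real.sqrt 3) • (th6 X - th6 (th6 (th6 (th6 (th6 X)))))

/-- `f₂ = (1/(2√3))(θ - θ² + θ⁴ - θ⁵)`. -/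
noncomputable def f2 (X : Matrix (Fin n) (Fin n) ℝ) : Matrix (Fin n) (Fin n) ℝ :=
  (1 / (2 * Real.sqrt 3)) •
    (th6 X - th6 (th6 X) + th6 (th6 (th6 (th6 X))) - th6 (th6 (th6 (th6 (th6 X)))))

/-- `f₃ = (1/(2√3))(θ + θ² - θ⁴ - θ⁵)`. -/
noncomputable def f3 (X : Matrix (Fin n) (Fin n) ℝ) : Matrix (Fin n) (Fin n) ℝ :=
  (1 / (2 * Real.sqrt 3)) •
    (th6 X + th6 (th6 X) - th6 (th6 (th6 (th6 X))) - th6 (th6 (th6 (th6 (th6 X)))))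

/-- `f₄ = (1/√3)(θ² - θ⁴)`. -/
noncomputable def f4 (X : Matrix (Fin n) (Fin n) ℝ) : Matrix (Fin n) (Fin n) ℝ :=
  (1 / Real.sqrt 3) • (th6 (th6 X) - th6 (th6 (th6 (th6 X))))

/-- The Killing f-structure condition for `f` w.r.t. the metric with characteristic
numbers `(s,t)`: `(1/2)[X, fX]_𝔪 + U_{s,t}(X, fX) - f(U_{s,t}(X,X)) = 0` for all `X ∈ 𝔪`. -/
def killCond (s t : ℝ) (f : Matrix (Fin n) (Fin n) ℝ → Matrix (Fin n) (Fin n) ℝ) : Prop :=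
  ∀ X : Matrix (Fin n) (Fin n) ℝ, inM X →
    (1 / 2 : ℝ) • pM (br X (f X)) + Ust s t X (f X) - f (Ust s t X X) = 0

/-- The nearly Kähler f-structure condition:
`(1/2)[fX, f²X]_𝔪 + U_{s,t}(fX, f²X) - f(U_{s,t}(fX, fX)) = 0` for all `X ∈ 𝔪`. -/
def nkCond (s t : ℝ) (f : Matrix (Fin n) (Fin n) ℝ → Matrix (Fin n) (Fin n) ℝ) : Prop :=
  ∀ X : Matrix (Fin n) (Fin n) ℝ, inM X →
    (1 / 2 : ℝ) • pM (br (f X) (f (f X))) + Ust s t (f X) (f (f X)) -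
      f (Ust s t (f X) (f X)) = 0

/-- The `G₁f` condition:
`f(2·U_{s,t}(fX, f²X) - f(U_{s,t}(fX, fX)) + f(U_{s,t}(f²X, f²X))) = 0` for all `X ∈ 𝔪`. -/
def g1Cond (s t : ℝ) (f : Matrix (Fin n) (Fin n) ℝ → Matrix (Fin n) (Fin n) ℝ) : Prop :=
  ∀ X : Matrix (Fin n) (Fin n) ℝ, inM X →
    f ((2 : ℝ) • Ust s t (f X) (f (f X)) - f (Ust s t (f X) (f X)) +
      f (Ust s t (f (f X)) (f (f X)))) = 0

end FlagMfld

open FlagMfld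

/-!
Write `θ = th4` and `X = X₁ + X₂ + X₃` with `Xᵢ ∈ 𝔪ᵢ`. Since `B₄` is orthogonal, `θ` is an
automorphism of the Lie algebra; it squares to `-1` on `𝔪₁` and `𝔪₂` and equals `-1` on `𝔪₃`, so
`f₀` is `θ` on `𝔪₁ ⊕ 𝔪₂` and `0` on `𝔪₃`. Moreover `[𝔪ᵢ, 𝔪ᵢ] ⊆ 𝔥` and `[𝔪ᵢ, 𝔪ⱼ] ⊆ 𝔪ₖ` for distinct
`i, j, k`. Applying `θ` to brackets gives `[X₁, θX₂] = [θX₁, X₂]` and `θ[Xᵢ, X₃] = -[θXᵢ, X₃]` for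
`i = 1, 2`, and the left-hand side of the Killing condition collapses to multiples of `[θX₂, X₃]`,
`[θX₁, X₃]` and `[X₁, θX₂]`. Each of the three brackets can be made nonzero while the other two
vanish, so `f₀` is Killing exactly when the three coefficients are zero.
-/

namespace FlagMfld

section Brackets

variable {n : ℕ} {X Y : Matrix (Fin n) (Fin n) ℝ}

theorem br_neg (X Y : Matrix (Fin n) (Fin n) ℝ) : br X (-Y) = -br X Y := by
  simp only [br, Matrix.mul_neg, Matrix.neg_mul]
  abel

theorem neg_br_swap (X Y : Matrix (Fin n) (Fin n) ℝ) : -br X Y = br Y X := neg_sub _ _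

theorem br_zero (X : Matrix (Fin n) (Fin n) ℝ) : br X 0 = 0 := by simp [br]

theorem neg_br (X Y : Matrix (Fin n) (Fin n) ℝ) : br (-X) Y = -br X Y := by
  rw [← neg_br_swap, br_neg, neg_br_swap]

theorem zero_br (X : Matrix (Fin n) (Fin n) ℝ) : br 0 X = 0 := by simp [br]

theorem br_add_add (X₁ X₂ X₃ Y₁ Y₂ Y₃ : Matrix (Fin n) (Fin n) ℝ) :
    br (X₁ + X₂ + X₃) (Y₁ + Y₂ + Y₃) =
      (br X₁ Y₁ + br X₂ Y₂ + br X₃ Y₃) +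
      ((br X₂ Y₃ - br Y₂ X₃) + (br X₁ Y₃ - br Y₁ X₃) + (br X₁ Y₂ - br Y₁ X₂)) := by
  simp only [br, Matrix.mul_add, Matrix.add_mul]
  abel

theorem exists_of_br_apply_ne_zero {i j : Fin n} (h : br X Y i j ≠ 0) :
    ∃ k, (X i k ≠ 0 ∧ Y k j ≠ 0) ∨ (Y i k ≠ 0 ∧ X k j ≠ 0) := by
  contrapose! h
  have hXY k : X i k * Y k j = 0 := mul_eq_zero.2 (or_iff_not_imp_left.2 (h k).1)
  have hYX k : Y i k * X k j = 0 := mul_eq_zero.2 (or_iff_not_imp_left.2 (h k).2)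
  simp [br, Matrix.mul_apply, hXY, hYX]

end Brackets

/-- `X` is skew-symmetric and its nonzero entries sit at positions related by `r`. The predicates
`inH`, `inM1`, `inM2`, `inM3` are definitionally of this form, so lemmas about `IsSkewOn` apply
to them directly. -/
def IsSkewOn {n : ℕ} (r : Fin n → Fin n → Prop) (X : Matrix (Fin n) (Fin n) ℝ) : Prop :=
  Xᵀ = -X ∧ ∀ i j, X i j ≠ 0 → r i j

section IsSkewOn

variable {n : ℕ} {r q p : Fin n → Fin n → Prop} {X Y : Matrix (Fin n) (Fin n) ℝ}

theorem apply_swap_of_transpose_eq_neg (hX : Xᵀ = -X) (i j : Fin n) : X j i = -X i j :=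
  congrFun₂ hX i j

theorem ne_of_apply_ne_zero (hX : Xᵀ = -X) {i j : Fin n} (h : X i j ≠ 0) : i ≠ j := by
  rintro rfl
  exact h (self_eq_neg.1 (apply_swap_of_transpose_eq_neg hX i i))

theorem isSkewOn_zero : IsSkewOn r 0 := by simp [IsSkewOn]

theorem isSkewOn_ite [DecidableRel r] (hr : ∀ i j, r i j ↔ r j i) (hX : Xᵀ = -X) :
    IsSkewOn r (of fun i j => if r i j then X i j else 0) := by
  refine ⟨?_, fun i j h => (ite_ne_right_iff.1 h).1⟩
  ext i j
  simp only [transpose_apply, of_apply, Matrix.neg_apply, hr j i,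
    apply_swap_of_transpose_eq_neg hX i j]
  split_ifs <;> simp

theorem isSkewOn_br (hX : IsSkewOn r X) (hY : IsSkewOn q Y)
    (h : ∀ i j k, i ≠ j → (r i k ∧ q k j) ∨ (q i k ∧ r k j) → p i j) :
    IsSkewOn p (br X Y) := by
  have hskew : (br X Y)ᵀ = -br X Y := by simp [br, hX.1, hY.1]
  refine ⟨hskew, fun i j hij => ?_⟩
  obtain ⟨k, hk⟩ := exists_of_br_apply_ne_zero hij
  exact h i j k (ne_of_apply_ne_zero hskew hij)
    (hk.imp (And.imp (hX.2 i k) (hY.2 k j)) (And.imp (hY.2 i k) (hX.2 k j)))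

end IsSkewOn

section Decomposition

variable {n : ℕ} {X X₁ X₂ X₃ Y₁ Y₂ Y₃ H : Matrix (Fin n) (Fin n) ℝ}

theorem inM1_p1 (hX : Xᵀ = -X) : inM1 (p1 X) := isSkewOn_ite (fun _ _ => or_comm) hX

theorem inM2_p2 (hX : Xᵀ = -X) : inM2 (p2 X) := isSkewOn_ite (fun _ _ => or_comm) hX

theorem inM3_p3 (hX : Xᵀ = -X) : inM3 (p3 X) := isSkewOn_ite (fun _ _ => or_comm) hX

theorem p1_add_p2_add_p3 (hX : inM X) : p1 X + p2 X + p3 X = X := by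
  obtain ⟨hskew, h₁₂, h₃⟩ := hX
  ext i j
  simp only [p1, p2, p3, Matrix.add_apply, of_apply]
  grind [apply_swap_of_transpose_eq_neg hskew i j, ne_of_apply_ne_zero hskew (i := i) (j := j)]

theorem p1_add_add (h₁ : inM1 X₁) (h₂ : inM2 X₂) (h₃ : inM3 X₃) : p1 (X₁ + X₂ + X₃) = X₁ := by
  ext i j
  simp only [p1, of_apply, Matrix.add_apply]
  grind [h₁.2 i j, h₂.2 i j, h₃.2 i j]

theorem p2_add_add (h₁ : inM1 X₁) (h₂ : inM2 X₂) (h₃ : inM3 X₃) : p2 (X₁ + X₂ + X₃) = X₂ := by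
  ext i j
  simp only [p2, of_apply, Matrix.add_apply]
  grind [h₁.2 i j, h₂.2 i j, h₃.2 i j]

theorem p3_add_add (h₁ : inM1 X₁) (h₂ : inM2 X₂) (h₃ : inM3 X₃) : p3 (X₁ + X₂ + X₃) = X₃ := by
  ext i j
  simp only [p3, of_apply, Matrix.add_apply]
  grind [h₁.2 i j, h₂.2 i j, h₃.2 i j]

theorem inM_add_add (h₁ : inM1 X₁) (h₂ : inM2 X₂) (h₃ : inM3 X₃) : inM (X₁ + X₂ + X₃) := by
  refine ⟨?_, fun i j hi hj => ?_, fun i j hi hj => ?_⟩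
  · rw [transpose_add, transpose_add, h₁.1, h₂.1, h₃.1]
    abel
  all_goals
    simp only [Matrix.add_apply]
    grind [h₁.2 i j, h₂.2 i j, h₃.2 i j]

theorem pM_add (X Y : Matrix (Fin n) (Fin n) ℝ) : pM (X + Y) = pM X + pM Y := by
  ext i j
  simp only [pM, of_apply, Matrix.add_apply]
  split_ifs <;> simp

theorem pM_sub (X Y : Matrix (Fin n) (Fin n) ℝ) : pM (X - Y) = pM X - pM Y := by
  rw [eq_sub_iff_add_eq, ← pM_add, sub_add_cancel]

theorem pM_eq_zero (hH : inH H) : pM H = 0 := by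
  ext i j
  simp only [pM, of_apply, Matrix.zero_apply]
  grind [hH.2 i j]

theorem pM_eq_self (hX : inM X) : pM X = X := by
  obtain ⟨hskew, h₁₂, h₃⟩ := hX
  ext i j
  simp only [pM, of_apply]
  grind [apply_swap_of_transpose_eq_neg hskew i j]

theorem inM1.inM (hX : inM1 X) : inM X := by
  simpa using inM_add_add hX isSkewOn_zero isSkewOn_zero

theorem inM2.inM (hX : inM2 X) : inM X := by
  simpa using inM_add_add isSkewOn_zero hX isSkewOn_zero

theorem inM3.inM (hX : inM3 X) : inM X := by
  simpa using inM_add_add isSkewOn_zero isSkewOn_zero hX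

theorem inH_br_inM1 (hX : inM1 X₁) (hY : inM1 Y₁) : inH (br X₁ Y₁) :=
  isSkewOn_br hX hY (by grind)

theorem inH_br_inM2 (hX : inM2 X₂) (hY : inM2 Y₂) : inH (br X₂ Y₂) :=
  isSkewOn_br hX hY (by grind)

theorem inH_br_inM3 (hX : inM3 X₃) (hY : inM3 Y₃) : inH (br X₃ Y₃) :=
  isSkewOn_br hX hY (by grind)

theorem inM3_br (h₁ : inM1 X₁) (h₂ : inM2 X₂) : inM3 (br X₁ X₂) := isSkewOn_br h₁ h₂ (by grind)

theorem inM2_br (h₁ : inM1 X₁) (h₃ : inM3 X₃) : inM2 (br X₁ X₃) := isSkewOn_br h₁ h₃ (by grind)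

theorem inM1_br (h₂ : inM2 X₂) (h₃ : inM3 X₃) : inM1 (br X₂ X₃) := isSkewOn_br h₂ h₃ (by grind)

theorem pM_br_add_add (hX₁ : inM1 X₁) (hX₂ : inM2 X₂) (hX₃ : inM3 X₃)
    (hY₁ : inM1 Y₁) (hY₂ : inM2 Y₂) (hY₃ : inM3 Y₃) :
    pM (br (X₁ + X₂ + X₃) (Y₁ + Y₂ + Y₃)) =
      (br X₂ Y₃ - br Y₂ X₃) + (br X₁ Y₃ - br Y₁ X₃) + (br X₁ Y₂ - br Y₁ X₂) := by
  simp only [br_add_add, pM_add, pM_sub, pM_eq_zero (inH_br_inM1 hX₁ hY₁),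
    pM_eq_zero (inH_br_inM2 hX₂ hY₂), pM_eq_zero (inH_br_inM3 hX₃ hY₃),
    pM_eq_self (inM1_br hX₂ hY₃).inM, pM_eq_self (inM1_br hY₂ hX₃).inM,
    pM_eq_self (inM2_br hX₁ hY₃).inM, pM_eq_self (inM2_br hY₁ hX₃).inM,
    pM_eq_self (inM3_br hX₁ hY₂).inM, pM_eq_self (inM3_br hY₁ hX₂).inM, add_zero, zero_add]

theorem Ust_add_add (s t : ℝ) (hX₁ : inM1 X₁) (hX₂ : inM2 X₂) (hX₃ : inM3 X₃)
    (hY₁ : inM1 Y₁) (hY₂ : inM2 Y₂) (hY₃ : inM3 Y₃) :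
    Ust s t (X₁ + X₂ + X₃) (Y₁ + Y₂ + Y₃) =
      ((t - s) / 2) • (br X₂ Y₃ + br Y₂ X₃) +
      ((t - 1) / (2 * s)) • (br X₁ Y₃ + br Y₁ X₃) +
      ((s - 1) / (2 * t)) • (br X₁ Y₂ + br Y₁ X₂) := by
  simp only [Ust, p1_add_add hX₁ hX₂ hX₃, p2_add_add hX₁ hX₂ hX₃, p3_add_add hX₁ hX₂ hX₃,
    p1_add_add hY₁ hY₂ hY₃, p2_add_add hY₁ hY₂ hY₃, p3_add_add hY₁ hY₂ hY₃]

end Decomposition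

section Automorphism

variable {m : ℕ} {X X₁ X₂ X₃ : Matrix (Fin (m + 3)) (Fin (m + 3)) ℝ}

/-- The permutation underlying `B₄`: it exchanges the second and third basis vectors. -/
def blockPerm (m : ℕ) : Equiv.Perm (Fin (m + 3)) := Equiv.swap 1 2

/-- The sign of the nonzero entry in row `i` of `B₄`, which sits in column `blockPerm m i`. -/
def blockSign (i : Fin (m + 3)) : ℝ := if i.val ≤ 1 then 1 else -1

theorem blockPerm_cases (i : Fin (m + 3)) :
    (i.val = 1 ∧ (blockPerm m i).val = 2) ∨ (i.val = 2 ∧ (blockPerm m i).val = 1) ∨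
      (i.val ≠ 1 ∧ i.val ≠ 2 ∧ blockPerm m i = i) := by
  have h₁ : ((1 : Fin (m + 3)) : ℕ) = 1 := rfl
  have h₂ : ((2 : Fin (m + 3)) : ℕ) = 2 := rfl
  rw [blockPerm, Equiv.swap_apply_def]
  grind

theorem blockPerm_blockPerm (i : Fin (m + 3)) : blockPerm m (blockPerm m i) = i :=
  Equiv.swap_apply_self ..

theorem B4_apply (i j : Fin (m + 3)) :
    B4 i j = if blockPerm m i = j then blockSign i else 0 := by
  simp only [B4, of_apply, blockSign]
  grind [blockPerm_cases i]

theorem th4_apply (X : Matrix (Fin (m + 3)) (Fin (m + 3)) ℝ) (i j : Fin (m + 3)) :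
    th4 X i j = blockSign i * blockSign j * X (blockPerm m i) (blockPerm m j) := by
  simp only [th4, Matrix.mul_apply, transpose_apply, B4_apply, ite_mul, mul_ite, zero_mul,
    mul_zero, Finset.sum_ite_eq, Finset.mem_univ, if_true]
  ring

theorem B4_mul_transpose : (B4 : Matrix (Fin (m + 3)) (Fin (m + 3)) ℝ) * B4ᵀ = 1 := by
  ext i j
  have h := th4_apply 1 i j
  rw [th4, Matrix.mul_one] at h
  simp only [h, Matrix.one_apply, (blockPerm m).injective.eq_iff]
  split_ifs with hij
  · subst hij
    unfold blockSign
    split_ifs <;> norm_num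
  · rw [mul_zero]

theorem th4_mul (X Y : Matrix (Fin (m + 3)) (Fin (m + 3)) ℝ) :
    th4 (X * Y) = th4 X * th4 Y := calc
  th4 (X * Y) = B4 * X * (B4ᵀ * B4) * Y * B4ᵀ := by
    rw [mul_eq_one_comm.1 B4_mul_transpose, Matrix.mul_one, th4, Matrix.mul_assoc B4 X Y]
  _ = th4 X * th4 Y := by simp only [th4, Matrix.mul_assoc]

theorem th4_br (X Y : Matrix (Fin (m + 3)) (Fin (m + 3)) ℝ) :
    th4 (br X Y) = br (th4 X) (th4 Y) := by
  rw [br, br, ← th4_mul, ← th4_mul, th4, Matrix.mul_sub, Matrix.sub_mul, th4, th4]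

theorem isSkewOn_th4 {r : Fin (m + 3) → Fin (m + 3) → Prop} (hX : IsSkewOn r X)
    (hr : ∀ i j, r (blockPerm m i) (blockPerm m j) → r i j) : IsSkewOn r (th4 X) := by
  refine ⟨?_, fun i j h => hr i j (hX.2 _ _ fun h₀ => h ?_)⟩
  · simp [th4, hX.1, Matrix.mul_assoc]
  · rw [th4_apply, h₀, mul_zero]

theorem inM1_th4 (hX : inM1 X) : inM1 (th4 X) :=
  isSkewOn_th4 hX fun i j => by grind [blockPerm_cases i, blockPerm_cases j]

theorem inM2_th4 (hX : inM2 X) : inM2 (th4 X) :=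
  isSkewOn_th4 hX fun i j => by grind [blockPerm_cases i, blockPerm_cases j]

theorem th4_eq_neg (hX : inM3 X) : th4 X = -X := by
  ext i j
  rw [th4_apply, Matrix.neg_apply]
  unfold blockSign
  grind [hX.2 i j, hX.2 (blockPerm m i) (blockPerm m j), blockPerm_cases i, blockPerm_cases j]

theorem blockSign_mul_blockSign_blockPerm (i : Fin (m + 3)) :
    blockSign i * blockSign (blockPerm m i) = if i.val = 1 ∨ i.val = 2 then -1 else 1 := by
  unfold blockSign
  grind [blockPerm_cases i]

theorem th4_th4_apply (X : Matrix (Fin (m + 3)) (Fin (m + 3)) ℝ) (i j : Fin (m + 3)) :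
    th4 (th4 X) i j = (if i.val = 1 ∨ i.val = 2 then -1 else 1) *
      (if j.val = 1 ∨ j.val = 2 then -1 else 1) * X i j := by
  rw [th4_apply, th4_apply, blockPerm_blockPerm, blockPerm_blockPerm,
    ← blockSign_mul_blockSign_blockPerm, ← blockSign_mul_blockSign_blockPerm]
  ring

theorem th4_th4_of_inM1 (hX : inM1 X) : th4 (th4 X) = -X := by
  ext i j
  rw [th4_th4_apply, Matrix.neg_apply]
  grind [hX.2 i j]

theorem th4_th4_of_inM2 (hX : inM2 X) : th4 (th4 X) = -X := by
  ext i j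
  rw [th4_th4_apply, Matrix.neg_apply]
  grind [hX.2 i j]

theorem br_th4_right_eq_br_th4_left (h₁ : inM1 X₁) (h₂ : inM2 X₂) :
    br X₁ (th4 X₂) = br (th4 X₁) X₂ := by
  have h : br (th4 X₁) (-X₂) = -br X₁ (th4 X₂) := by
    rw [← th4_th4_of_inM2 h₂, ← th4_br, th4_eq_neg (inM3_br h₁ (inM2_th4 h₂))]
  rw [br_neg] at h
  exact (neg_injective h).symm

theorem th4_br_inM3 (X : Matrix (Fin (m + 3)) (Fin (m + 3)) ℝ) (h₃ : inM3 X₃) :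
    th4 (br X X₃) = -br (th4 X) X₃ := by
  rw [th4_br, th4_eq_neg h₃, br_neg]

end Automorphism

section CanonicalStructure

theorem th4_zero {n : ℕ} : th4 (0 : Matrix (Fin n) (Fin n) ℝ) = 0 := by simp [th4]

theorem th4_neg {n : ℕ} (X : Matrix (Fin n) (Fin n) ℝ) : th4 (-X) = -th4 X := by simp [th4]

theorem f0_add {n : ℕ} (X Y : Matrix (Fin n) (Fin n) ℝ) : f0 (X + Y) = f0 X + f0 Y := by
  simp only [f0, th4, Matrix.mul_add, Matrix.add_mul]
  module

theorem f0_smul {n : ℕ} (c : ℝ) (X : Matrix (Fin n) (Fin n) ℝ) : f0 (c • X) = c • f0 X := by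
  simp only [f0, th4, Matrix.mul_smul, Matrix.smul_mul]
  module

variable {m : ℕ} {X X₁ X₂ X₃ : Matrix (Fin (m + 3)) (Fin (m + 3)) ℝ}

theorem f0_eq_th4 (hX : th4 (th4 X) = -X) : f0 X = th4 X := by
  rw [f0, hX, th4_neg]
  module

theorem f0_eq_zero (hX : inM3 X) : f0 X = 0 := by
  simp [f0, th4_neg, th4_eq_neg hX]

theorem f0_add_add (h₁ : inM1 X₁) (h₂ : inM2 X₂) (h₃ : inM3 X₃) :
    f0 (X₁ + X₂ + X₃) = th4 X₁ + th4 X₂ := by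
  rw [f0_add, f0_add, f0_eq_th4 (th4_th4_of_inM1 h₁), f0_eq_th4 (th4_th4_of_inM2 h₂),
    f0_eq_zero h₃, add_zero]

theorem f0_Ust_self (s t : ℝ) (h₁ : inM1 X₁) (h₂ : inM2 X₂) (h₃ : inM3 X₃) :
    f0 (Ust s t (X₁ + X₂ + X₃) (X₁ + X₂ + X₃)) =
      (s - t) • br (th4 X₂) X₃ + ((1 - t) / s) • br (th4 X₁) X₃ := by
  have h₂₃ : f0 (br X₂ X₃) = -br (th4 X₂) X₃ := by
    rw [f0_eq_th4 (th4_th4_of_inM1 (inM1_br h₂ h₃)), th4_br_inM3 X₂ h₃]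
  have h₁₃ : f0 (br X₁ X₃) = -br (th4 X₁) X₃ := by
    rw [f0_eq_th4 (th4_th4_of_inM2 (inM2_br h₁ h₃)), th4_br_inM3 X₁ h₃]
  simp only [Ust_add_add s t h₁ h₂ h₃ h₁ h₂ h₃, f0_add, f0_smul, h₂₃, h₁₃,
    f0_eq_zero (inM3_br h₁ h₂)]
  module

/-- The obstruction to the Killing condition at `X`: by definition, `killCond s t f` says that it
vanishes for all `X ∈ 𝔪`. -/
noncomputable def killDefect {n : ℕ} (s t : ℝ)
    (f : Matrix (Fin n) (Fin n) ℝ → Matrix (Fin n) (Fin n) ℝ) (X : Matrix (Fin n) (Fin n) ℝ) :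
    Matrix (Fin n) (Fin n) ℝ :=
  (1 / 2 : ℝ) • pM (br X (f X)) + Ust s t X (f X) - f (Ust s t X X)

theorem killDefect_f0_add_add (s t : ℝ) (h₁ : inM1 X₁) (h₂ : inM2 X₂) (h₃ : inM3 X₃) :
    killDefect s t f0 (X₁ + X₂ + X₃) =
      ((3 * (t - s) - 1) / 2) • br (th4 X₂) X₃ +
      ((3 * ((t - 1) / s) - 1) / 2) • br (th4 X₁) X₃ +
      ((s - 1) / t) • br X₁ (th4 X₂) := by
  have h₀ : inM3 (0 : Matrix (Fin (m + 3)) (Fin (m + 3)) ℝ) := isSkewOn_zero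
  have hf : f0 (X₁ + X₂ + X₃) = th4 X₁ + th4 X₂ + 0 := by rw [f0_add_add h₁ h₂ h₃, add_zero]
  rw [killDefect, f0_Ust_self s t h₁ h₂ h₃, hf,
    pM_br_add_add h₁ h₂ h₃ (inM1_th4 h₁) (inM2_th4 h₂) h₀,
    Ust_add_add s t h₁ h₂ h₃ (inM1_th4 h₁) (inM2_th4 h₂) h₀, ← br_th4_right_eq_br_th4_left h₁ h₂,
    br_zero, br_zero]
  module

end CanonicalStructure

section ElementarySkewMatrices

variable {n : ℕ}

/-- The elementary skew-symmetric matrix `Eᵢⱼ - Eⱼᵢ`; these matrices make the brackets between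
the summands of `𝔪` nonzero. -/
def skewSingle (i j : Fin n) : Matrix (Fin n) (Fin n) ℝ := single i j 1 - single j i 1

theorem isSkewOn_skewSingle {r : Fin n → Fin n → Prop} {i j : Fin n} (hij : r i j) (hji : r j i) :
    IsSkewOn r (skewSingle i j) := by
  refine ⟨by simp [skewSingle], fun a b h => ?_⟩
  simp only [skewSingle, Matrix.sub_apply, Matrix.single_apply] at h
  grind

theorem br_skewSingle {i j k : Fin n} (hij : i ≠ j) (hjk : j ≠ k) (hik : i ≠ k) :
    br (skewSingle i j) (skewSingle j k) = skewSingle i k := by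
  simp [br, skewSingle, Matrix.mul_sub, Matrix.sub_mul, hij, hjk, hik, hij.symm, hjk.symm, hik.symm]

theorem skewSingle_ne_zero {i j : Fin n} (hij : i ≠ j) : skewSingle i j ≠ 0 := fun h => by
  simpa [skewSingle, Matrix.single_apply, hij] using congrFun₂ h i j

end ElementarySkewMatrices

section Killing

theorem exists_br_ne_zero {n : ℕ} (hn : 4 ≤ n) :
    ∃ X₁ X₂ X₃ : Matrix (Fin n) (Fin n) ℝ, inM1 X₁ ∧ inM2 X₂ ∧ inM3 X₃ ∧
      br X₁ X₂ ≠ 0 ∧ br X₁ X₃ ≠ 0 ∧ br X₂ X₃ ≠ 0 := by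
  let a : Fin n := ⟨0, by lia⟩
  let b : Fin n := ⟨1, by lia⟩
  let c : Fin n := ⟨3, by lia⟩
  have hab : a ≠ b := by simp [a, b]
  have hbc : b ≠ c := by simp [b, c]
  have hca : c ≠ a := by simp [c, a]
  refine ⟨skewSingle a b, skewSingle b c, skewSingle c a,
    isSkewOn_skewSingle (by simp [a, b]) (by simp [a, b]),
    isSkewOn_skewSingle (by simp [b, c]) (by simp [b, c]),
    isSkewOn_skewSingle (by simp [c, a]) (by simp [c, a]), ?_, ?_, ?_⟩
  · rw [br_skewSingle hab hbc hca.symm]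
    exact skewSingle_ne_zero hca.symm
  · rw [← neg_br_swap, br_skewSingle hca hab hbc.symm]
    exact neg_ne_zero.2 (skewSingle_ne_zero hbc.symm)
  · rw [br_skewSingle hbc hca hab.symm]
    exact skewSingle_ne_zero hab.symm

theorem killCond_f0_iff_forall {m : ℕ} (s t : ℝ) :
    killCond (n := m + 3) s t f0 ↔
      ∀ X₁ X₂ X₃ : Matrix (Fin (m + 3)) (Fin (m + 3)) ℝ, inM1 X₁ → inM2 X₂ → inM3 X₃ →
        ((3 * (t - s) - 1) / 2) • br (th4 X₂) X₃ +
        ((3 * ((t - 1) / s) - 1) / 2) • br (th4 X₁) X₃ +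
        ((s - 1) / t) • br X₁ (th4 X₂) = 0 := by
  refine ⟨fun h X₁ X₂ X₃ h₁ h₂ h₃ => ?_, fun h X hX => ?_⟩
  · rw [← killDefect_f0_add_add s t h₁ h₂ h₃]
    exact h _ (inM_add_add h₁ h₂ h₃)
  · change killDefect s t f0 X = 0
    rw [← p1_add_p2_add_p3 hX,
      killDefect_f0_add_add s t (inM1_p1 hX.1) (inM2_p2 hX.1) (inM3_p3 hX.1)]
    exact h _ _ _ (inM1_p1 hX.1) (inM2_p2 hX.1) (inM3_p3 hX.1)

theorem killCond_f0_iff {n : ℕ} (hn : 4 ≤ n) (s t : ℝ) :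
    killCond (n := n) s t f0 ↔
      3 * (t - s) - 1 = 0 ∧ 3 * ((t - 1) / s) - 1 = 0 ∧ (s - 1) / t = 0 := by
  obtain ⟨m, rfl⟩ : ∃ m, n = m + 3 := ⟨n - 3, by lia⟩
  rw [killCond_f0_iff_forall]
  constructor
  · intro h
    obtain ⟨X₁, X₂, X₃, h₁, h₂, h₃, h₁₂, h₁₃, h₂₃⟩ := exists_br_ne_zero hn
    -- `θ² = -1` on `𝔪₁` and `𝔪₂`, so evaluating at `θXᵢ` replaces `θXᵢ` by `-Xᵢ` in the brackets.
    have hdefect₁ := h 0 (th4 X₂) X₃ isSkewOn_zero (inM2_th4 h₂) h₃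
    have hdefect₂ := h (th4 X₁) 0 X₃ (inM1_th4 h₁) isSkewOn_zero h₃
    have hdefect₃ := h X₁ (th4 X₂) 0 h₁ (inM2_th4 h₂) isSkewOn_zero
    simp only [th4_th4_of_inM1 h₁, th4_th4_of_inM2 h₂, th4_zero, br_zero, zero_br, br_neg, neg_br,
      smul_zero, add_zero, zero_add, smul_neg, neg_zero, neg_eq_zero, smul_eq_zero, h₁₂, h₁₃, h₂₃,
      or_false] at hdefect₁ hdefect₂ hdefect₃
    exact ⟨by linarith, by linarith, hdefect₃⟩
  · rintro ⟨h₁, h₂, h₃⟩ X₁ X₂ X₃ - - -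
    simp [h₁, h₂, h₃]

end Killing

end FlagMfld

theorem statement13_general (n : ℕ) (hn : 4 ≤ n) (s t : ℝ) (hs : s ≠ 0) (ht : t ≠ 0) :
    killCond (n := n) s t f0 ↔ (s = 1 ∧ t = 4 / 3) := by
  rw [killCond_f0_iff hn]
  constructor
  · rintro ⟨h₁, h₂, h₃⟩
    field_simp at h₂ h₃
    constructor <;> linarith
  · rintro ⟨rfl, rfl⟩
    norm_num

/-- On the 4-symmetric space `SO(n)/SO(2)×SO(n-3)`, the canonical
f-structure `f₀` is a Killing f-structure for the invariant metric with characteristic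
numbers `(s,t)` iff `s = 1` and `t = 4/3`. -/
theorem statement13 (n : ℕ) (hn : 4 ≤ n) (s t : ℝ) (hs : 0 < s) (ht : 0 < t) :
    killCond (n := n) s t f0 ↔ (s = 1 ∧ t = 4 / 3) := by
  exact statement13_general n hn s t hs.ne' ht.ne'
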